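/- Let F := K4⁻ × F*. Then for every positive integer t, the family {F} is not t-stable; that is, the stability number ξ({F}) is infinite. -/

import Mathlib

open scoped Classical

/-- A collection of finite edge sets is a 3-graph if every edge has exactly 3 vertices. -/
def IsThreeGraph {α : Type*} (H : Set (Finset α)) : Prop := ∀ e ∈ H, e.card = 3

/-- `φ` is a homomorphism of 3-graphs from `G` to `H`: the image of every edge of `G`
is a 3-element set that is an edge of `H`. -/
def IsHomOn {α β : Type*} (G : Set (Finset α)) (H : Set (Finset β)) (φ : α → β) : Prop :=
  ∀ e ∈ G, (e.image φ).card = 3 ∧ e.image φ ∈ H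

/-- `H` contains a subgraph isomorphic to `G`. -/
def ContainsCopy {α β : Type*} (G : Set (Finset α)) (H : Set (Finset β)) : Prop :=
  ∃ φ : α → β, Function.Injective φ ∧ ∀ e ∈ G, e.image φ ∈ H

/-- `K4⁻`, on vertices `a=0, b=1, c=2, d=3`, with edges `abc, abd, acd`. -/
def K4minus : Set (Finset (Fin 4)) := {{0,1,2}, {0,1,3}, {0,2,3}}

/-- `F*`, on vertices `1,…,7` (represented by `0,…,6`), with edges `123, 124, 345, 156, 257`. -/
def Fstar : Set (Finset (Fin 7)) := {{0,1,2}, {0,1,3}, {2,3,4}, {0,4,5}, {1,4,6}}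

/-- The categorical product of two 3-graphs: a 3-element set of pairs is an edge iff
its set of first coordinates is an edge of `G` and its set of second coordinates is an
edge of `H`. -/
def ProdGraph {α β : Type*} (G : Set (Finset α)) (H : Set (Finset β)) :
    Set (Finset (α × β)) :=
  {e | e.card = 3 ∧ e.image Prod.fst ∈ G ∧ e.image Prod.snd ∈ H}

/-- The 3-graph `F := K4⁻ × F*`. -/
def F : Set (Finset (Fin 4 × Fin 7)) := ProdGraph K4minus Fstar

/-- `ex(n, {F})`: the maximum number of edges of an `n`-vertex 3-graph containing no
subgraph isomorphic to `F`. -/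
noncomputable def exF (n : ℕ) : ℕ :=
  sSup {k | ∃ H : Set (Finset (Fin n)), IsThreeGraph H ∧ ¬ ContainsCopy F H ∧ H.ncard = k}

/-- The family `{F}` is `t`-stable: there are templates `G m 0, …, G m (t-1)` on `m`
vertices such that for every `δ > 0` there are `ε > 0` and `N₀` with: every `F`-free
3-graph `H` on `n ≥ N₀` vertices with more than `(1 - ε) · ex(n, {F})` edges can be
transformed into some `G n i` by adding and deleting at most `δ n³` edges after a
relabelling of the vertices. -/
def TStableF (t : ℕ) : Prop :=
  ∃ G : (m : ℕ) → Fin t → Set (Finset (Fin m)),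
    (∀ m i, IsThreeGraph (G m i)) ∧
    ∀ δ : ℝ, 0 < δ → ∃ ε : ℝ, 0 < ε ∧ ∃ N₀ : ℕ, ∀ n : ℕ, N₀ ≤ n →
      ∀ H : Set (Finset (Fin n)), IsThreeGraph H → ¬ ContainsCopy F H →
        (1 - ε) * (exF n : ℝ) < (H.ncard : ℝ) →
        ∃ i : Fin t, ∃ ψ : Equiv.Perm (Fin n),
          ((symmDiff ((fun e => e.image ⇑ψ) '' H) (G n i)).ncard : ℝ) ≤ δ * (n : ℝ) ^ 3


/-! Part 1: the pattern -/

def kE (a b c : Fin 4) : Prop := ({a, b, c} : Finset (Fin 4)) ∈ K4minus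
def fE (x y z : Fin 7) : Prop := ({x, y, z} : Finset (Fin 7)) ∈ Fstar

def bitP (k : Bool) (v : Fin 6) : Bool :=
  if k then (v = 2 || v = 3) else (v = 1 || v = 3)

/-- edges `{u, v, w}` with `u` the apex -/
def RP1 (u v w : Fin 6) : Bool :=
  (u = 4 && v.val < 4 && w.val < 4 && (bitP true v != bitP true w)) ||
  (u = 5 && v.val < 4 && w.val < 4 && (bitP false v != bitP false w))

def RP (u v w : Fin 6) : Bool := RP1 u v w || RP1 v u w || RP1 w u v

lemma bool12 : ∀ x0 x1 x2 x3 y0 y1 y2 y3 z0 z1 z2 z3 : ℕ,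
    x0 ≤ 1 → x1 ≤ 1 → x2 ≤ 1 → x3 ≤ 1 → y0 ≤ 1 → y1 ≤ 1 → y2 ≤ 1 → y3 ≤ 1 →
    z0 ≤ 1 → z1 ≤ 1 → z2 ≤ 1 → z3 ≤ 1 →
    (x0 + y1 + z2 = 1) → (x0 + y2 + z1 = 1) → (x1 + y0 + z2 = 1) →
    (x1 + y2 + z0 = 1) → (x2 + y0 + z1 = 1) → (x2 + y1 + z0 = 1) →
    (x0 + y1 + z3 = 1) → (x0 + y3 + z1 = 1) → (x1 + y0 + z3 = 1) →
    (x1 + y3 + z0 = 1) → (x3 + y0 + z1 = 1) → (x3 + y1 + z0 = 1) →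
    (x0 + y2 + z3 = 1) → (x0 + y3 + z2 = 1) → (x2 + y0 + z3 = 1) →
    (x2 + y3 + z0 = 1) → (x3 + y0 + z2 = 1) → (x3 + y2 + z0 = 1) →
    ((x0 = 1 ∧ x1 = 0 ∧ x2 = 0 ∧ x3 = 0) ∧ (y0 = 1 ∧ y1 = 0 ∧ y2 = 0 ∧ y3 = 0) ∧
      (z0 = 1 ∧ z1 = 0 ∧ z2 = 0 ∧ z3 = 0)) ∨
    (x0 = x1 ∧ y0 = y1 ∧ z0 = z1 ∧ x0 + y0 + z0 = 1) := by
  intros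
  omega

lemma RP_one (u v w : Fin 6) (h : RP u v w = true) :
    (if 4 ≤ u.val then 1 else 0) + (if 4 ≤ v.val then 1 else 0) +
      (if 4 ≤ w.val then 1 else 0) = 1 := by
  revert u v w; decide

lemma RP_bit (u v w : Fin 6) (h : RP u v w = true) (hu : 4 ≤ u.val) :
    bitP (decide (u = 4)) v ≠ bitP (decide (u = 4)) w := by
  revert u v w; decide

lemma RP_ne (u v w : Fin 6) (h : RP u v w = true) : u ≠ v ∧ u ≠ w ∧ v ≠ w := by
  revert u v w; decide

lemma RP_swap (u v w : Fin 6) : RP u v w = RP v u w := by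
  revert u v w; decide

lemma RP_rot (u v w : Fin 6) : RP u v w = RP v w u := by
  revert u v w; decide

lemma kE_swap {x y z : Fin 4} (h : kE x y z) : kE y x z := by
  unfold kE at *; rwa [Finset.insert_comm]
lemma kE_swap' {x y z : Fin 4} (h : kE x y z) : kE x z y := by
  unfold kE at *; rwa [Finset.pair_comm]

lemma kE_list : kE 0 1 2 ∧ kE 0 2 1 ∧ kE 1 0 2 ∧ kE 1 2 0 ∧ kE 2 0 1 ∧ kE 2 1 0 ∧
    kE 0 1 3 ∧ kE 0 3 1 ∧ kE 1 0 3 ∧ kE 1 3 0 ∧ kE 3 0 1 ∧ kE 3 1 0 ∧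
    kE 0 2 3 ∧ kE 0 3 2 ∧ kE 2 0 3 ∧ kE 2 3 0 ∧ kE 3 0 2 ∧ kE 3 2 0 := by
  have h1 : kE 0 1 2 := by simp [kE, K4minus]
  have h2 : kE 0 1 3 := by simp [kE, K4minus]
  have h3 : kE 0 2 3 := by simp [kE, K4minus]
  have all : ∀ x y z, kE x y z → kE x y z ∧ kE x z y ∧ kE y x z ∧ kE y z x ∧ kE z x y ∧
      kE z y x := fun x y z h => ⟨h, kE_swap' h, kE_swap h, kE_swap' (kE_swap h),
      kE_swap (kE_swap' h), kE_swap (kE_swap' (kE_swap h))⟩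
  have := all _ _ _ h1
  have := all _ _ _ h2
  have := all _ _ _ h3
  tauto

lemma fE_swap {x y z : Fin 7} (h : fE x y z) : fE y x z := by
  unfold fE at *; rwa [Finset.insert_comm]
lemma fE_swap' {x y z : Fin 7} (h : fE x y z) : fE x z y := by
  unfold fE at *; rwa [Finset.pair_comm]

lemma fE_list : fE 0 1 2 ∧ fE 0 1 3 ∧ fE 2 3 4 ∧ fE 0 4 5 ∧ fE 1 4 6 := by
  simp [fE, Fstar]

lemma no_hom_P (φ : Fin 4 × Fin 7 → Fin 6)
    (h : ∀ a b c x y z, kE a b c → fE x y z → RP (φ (a, x)) (φ (b, y)) (φ (c, z)) = true) :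
    False := by
  obtain ⟨s, hs⟩ : ∃ s : Fin 4 → Fin 7 → ℕ, s = fun a x => if 4 ≤ (φ (a, x)).val then 1 else 0 :=
    ⟨_, rfl⟩
  have hs1 : ∀ a x, s a x ≤ 1 := by intro a x; rw [hs]; dsimp only; split_ifs <;> omega
  have h1 : ∀ a b c x y z, kE a b c → fE x y z → s a x + s b y + s c z = 1 := by
    intro a b c x y z hk hf
    rw [hs]; exact RP_one _ _ _ (h a b c x y z hk hf)
  obtain ⟨k1, k2, k3, k4, k5, k6, k7, k8, k9, k10, k11, k12, k13, k14, k15, k16, k17, k18⟩ :=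
    kE_list
  have key : ∀ x y z, fE x y z →
      ((s 0 x = 1 ∧ s 1 x = 0 ∧ s 2 x = 0 ∧ s 3 x = 0) ∧
       (s 0 y = 1 ∧ s 1 y = 0 ∧ s 2 y = 0 ∧ s 3 y = 0) ∧
       (s 0 z = 1 ∧ s 1 z = 0 ∧ s 2 z = 0 ∧ s 3 z = 0)) ∨
      (s 0 x = s 1 x ∧ s 0 y = s 1 y ∧ s 0 z = s 1 z ∧ s 0 x + s 0 y + s 0 z = 1) := by
    intro x y z hf
    exact bool12 _ _ _ _ _ _ _ _ _ _ _ _ (hs1 _ _) (hs1 _ _) (hs1 _ _) (hs1 _ _) (hs1 _ _)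
      (hs1 _ _) (hs1 _ _) (hs1 _ _) (hs1 _ _) (hs1 _ _) (hs1 _ _) (hs1 _ _)
      (h1 _ _ _ _ _ _ k1 hf) (h1 _ _ _ _ _ _ k2 hf) (h1 _ _ _ _ _ _ k3 hf)
      (h1 _ _ _ _ _ _ k4 hf) (h1 _ _ _ _ _ _ k5 hf) (h1 _ _ _ _ _ _ k6 hf)
      (h1 _ _ _ _ _ _ k7 hf) (h1 _ _ _ _ _ _ k8 hf) (h1 _ _ _ _ _ _ k9 hf)
      (h1 _ _ _ _ _ _ k10 hf) (h1 _ _ _ _ _ _ k11 hf) (h1 _ _ _ _ _ _ k12 hf)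
      (h1 _ _ _ _ _ _ k13 hf) (h1 _ _ _ _ _ _ k14 hf) (h1 _ _ _ _ _ _ k15 hf)
      (h1 _ _ _ _ _ _ k16 hf) (h1 _ _ _ _ _ _ k17 hf) (h1 _ _ _ _ _ _ k18 hf)
  obtain ⟨f1, f2, f3, f4, f5⟩ := fE_list
  have a1 := key _ _ _ f1
  have a2 := key _ _ _ f2
  have a3 := key _ _ _ f3
  have a4 := key _ _ _ f4
  have a5 := key _ _ _ f5
  have b0 : ∀ x : Fin 7, s 0 x = 1 := by
    have : s 0 0 = 1 ∧ s 0 1 = 1 ∧ s 0 2 = 1 ∧ s 0 3 = 1 ∧ s 0 4 = 1 ∧ s 0 5 = 1 ∧ s 0 6 = 1 := by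
      clear h1 key h hs
      omega
    intro x; fin_cases x <;> simp_all
  clear key a1 a2 a3 a4 a5
  have hB : ∀ x, 4 ≤ (φ (0, x)).val := by
    intro x; have := b0 x; rw [hs] at this; dsimp only at this
    by_contra hc; simp [hc] at this
  obtain ⟨k, hk⟩ : ∃ k : Fin 7 → Bool, k = fun x => decide (φ (0, x) = 4) := ⟨_, rfl⟩
  have hD : ∀ x y z, fE x y z → 
      bitP (k x) (φ (1, y)) ≠ bitP (k x) (φ (2, z)) ∧
      bitP (k x) (φ (1, y)) ≠ bitP (k x) (φ (3, z)) ∧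
      bitP (k x) (φ (2, y)) ≠ bitP (k x) (φ (1, z)) ∧
      bitP (k x) (φ (2, y)) ≠ bitP (k x) (φ (3, z)) ∧
      bitP (k x) (φ (3, y)) ≠ bitP (k x) (φ (1, z)) ∧
      bitP (k x) (φ (3, y)) ≠ bitP (k x) (φ (2, z)) := by
    intro x y z hf
    rw [hk]
    exact ⟨RP_bit _ _ _ (h 0 1 2 x y z k1 hf) (hB x), RP_bit _ _ _ (h 0 1 3 x y z k7 hf) (hB x),
      RP_bit _ _ _ (h 0 2 1 x y z k2 hf) (hB x), RP_bit _ _ _ (h 0 2 3 x y z k13 hf) (hB x),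
      RP_bit _ _ _ (h 0 3 1 x y z k8 hf) (hB x), RP_bit _ _ _ (h 0 3 2 x y z k14 hf) (hB x)⟩
  have tri : ∀ κ x x' x'' y z w, k x = κ → k x' = κ → k x'' = κ → fE x y z → fE x' z w →
      fE x'' y w → False := by
    intro κ x x' x'' y z w e1 e2 e3 g1 g2 g3
    have q1 := (hD _ _ _ g1).1
    have q2 := (hD _ _ _ g2).2.2.2.1
    have q3 := (hD _ _ _ g3).2.1
    rw [e1] at q1; rw [e2] at q2; rw [e3] at q3
    revert q1 q2 q3
    cases bitP κ (φ (1, y)) <;> cases bitP κ (φ (2, z)) <;> cases bitP κ (φ (3, w)) <;> simp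
  -- triangles: mono edge `x y z`; also 2 3 4 in L1 L2 L5 etc.
  have mono : ∀ x y z, fE x y z → k x = k y → k y = k z → False := by
    intro x y z hf e1 e2
    exact tri (k x) x y z y z x rfl e1.symm (e2.symm.trans e1.symm) hf
      (fE_swap' (fE_swap hf)) (fE_swap' (fE_swap (fE_swap' hf)))
  have m1 := mono _ _ _ f1
  have m2 := mono _ _ _ f2
  have m3 := mono _ _ _ f3
  -- L_v ∪ L_4 contains the triangle v' 2 3 : classes {0,4}: 1-2 , 1-3, 2-3
  have m4 : k 0 = k 4 → False := fun e =>
    tri (k 0) 0 4 0 1 2 3 rfl e.symm rfl f1 (fE_swap (fE_swap' f3)) f2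
  have m5 : k 1 = k 4 → False := fun e =>
    tri (k 1) 1 4 1 0 2 3 rfl e.symm rfl (fE_swap f1) (fE_swap (fE_swap' f3)) (fE_swap f2)
  clear mono tri hD hk hB
  revert m1 m2 m3 m4 m5
  generalize k 0 = c0; generalize k 1 = c1; generalize k 2 = c2
  generalize k 3 = c3; generalize k 4 = c4
  cases c0 <;> cases c1 <;> cases c2 <;> cases c3 <;> cases c4 <;> simp

/-! Part 2: Lagrangian bound -/

noncomputable def TT {ι : Type*} [Fintype ι] (e : ι → ι → ι → ℝ) (x y z : ι → ℝ) : ℝ :=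
  ∑ i, ∑ j, ∑ k, e i j k * x i * y j * z k

section TT
variable {ι : Type*} [Fintype ι] (e : ι → ι → ι → ℝ)

lemma TT_add1 (x x' y z : ι → ℝ) : TT e (x + x') y z = TT e x y z + TT e x' y z := by
  simp only [TT, Pi.add_apply, mul_add, add_mul, Finset.sum_add_distrib]
lemma TT_add2 (x y y' z : ι → ℝ) : TT e x (y + y') z = TT e x y z + TT e x y' z := by
  simp only [TT, Pi.add_apply, mul_add, add_mul, Finset.sum_add_distrib]
lemma TT_add3 (x y z z' : ι → ℝ) : TT e x y (z + z') = TT e x y z + TT e x y z' := by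
  simp only [TT, Pi.add_apply, mul_add, Finset.sum_add_distrib]

lemma TT_sw12 (h : ∀ i j k, e i j k = e j i k) (x y z : ι → ℝ) : TT e x y z = TT e y x z := by
  unfold TT
  rw [Finset.sum_comm]
  refine Finset.sum_congr rfl fun i _ => Finset.sum_congr rfl fun j _ =>
    Finset.sum_congr rfl fun k _ => ?_
  rw [h]; ring
lemma TT_sw23 (h : ∀ i j k, e i j k = e i k j) (x y z : ι → ℝ) : TT e x y z = TT e x z y := by
  unfold TT
  refine Finset.sum_congr rfl fun i _ => ?_
  rw [Finset.sum_comm]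
  refine Finset.sum_congr rfl fun j _ =>
    Finset.sum_congr rfl fun k _ => ?_
  rw [h]; ring

lemma TT_cube (h : ∀ i j k, e i j k = e j i k) (h' : ∀ i j k, e i j k = e i k j)
    (x u : ι → ℝ) : TT e (x + u) (x + u) (x + u) =
      TT e x x x + 3 * TT e u x x + 3 * TT e u u x + TT e u u u := by
  simp only [TT_add1, TT_add2, TT_add3]
  have a1 : TT e x u x = TT e u x x := TT_sw12 e h _ _ _
  have a2 : TT e x x u = TT e u x x := by rw [TT_sw23 e h', a1]
  have a3 : TT e x u u = TT e u u x := by rw [TT_sw12 e h, TT_sw23 e h']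
  have a4 : TT e u x u = TT e u u x := by rw [TT_sw23 e h']
  rw [a1, a2, a3, a4]; ring

lemma TT_single1 (i : ι) (t : ℝ) (y z : ι → ℝ) :
    TT e (Pi.single i t) y z = t * ∑ j, ∑ k, e i j k * y j * z k := by
  unfold TT
  rw [Finset.sum_eq_single i]
  · simp only [Pi.single_eq_same, Finset.mul_sum]
    exact Finset.sum_congr rfl fun j _ => Finset.sum_congr rfl fun k _ => by ring
  · intro b _ hb; simp [Pi.single_eq_of_ne hb]
  · simp

lemma TT_single2 (i j : ι) (t s : ℝ) (z : ι → ℝ) :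
    TT e (Pi.single i t) (Pi.single j s) z = t * s * ∑ k, e i j k * z k := by
  rw [TT_single1, Finset.sum_eq_single j]
  · simp only [Pi.single_eq_same, Finset.mul_sum]
    exact Finset.sum_congr rfl fun k _ => by ring
  · intro b _ hb; simp [Pi.single_eq_of_ne hb]
  · simp

lemma TT_smul (t : ℝ) (x : ι → ℝ) : TT e (t • x) (t • x) (t • x) = t ^ 3 * TT e x x x := by
  simp only [TT, Finset.mul_sum, Pi.smul_apply, smul_eq_mul]
  exact Finset.sum_congr rfl fun j _ => Finset.sum_congr rfl fun k _ =>
    Finset.sum_congr rfl fun k _ => by ring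

lemma TT_cont : Continuous fun x : ι → ℝ => TT e x x x := by
  unfold TT; fun_prop

end TT

lemma lagrangian {ι : Type*} [Fintype ι] (R : ι → ι → ι → Prop)
    (sw : ∀ i j k, R i j k → R j i k) (sw' : ∀ i j k, R i j k → R i k j)
    (irr : ∀ i j k, R i j k → i ≠ j)
    (hK : ∀ i j k l, R i j k → R i j l → R i k l → False)
    (hF : ∀ i j k l p q r, R i j k → R i j l → R k l p → R i p q → R j p r → False)
    (x₀ : ι → ℝ) (hx₀ : x₀ ∈ stdSimplex ℝ ι) :
    TT (fun i j k => if R i j k then (1 : ℝ) else 0) x₀ x₀ x₀ ≤ 2 / 9 := by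
  obtain ⟨e, he⟩ : ∃ e : ι → ι → ι → ℝ, e = fun i j k => if R i j k then (1 : ℝ) else 0 := ⟨_, rfl⟩
  rw [← he]
  have e0 : ∀ i j k, 0 ≤ e i j k := by intro i j k; rw [he]; dsimp only; split_ifs <;> norm_num
  have e1 : ∀ i j k, R i j k → e i j k = 1 := by intro i j k h; rw [he]; simp [h]
  have en : ∀ i j k, ¬ R i j k → e i j k = 0 := by intro i j k h; rw [he]; simp [h]
  have hs : ∀ i j k, e i j k = e j i k := by
    intro i j k; rw [he]; dsimp only; congr 1; exact propext ⟨sw _ _ _, sw _ _ _⟩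
  have hs' : ∀ i j k, e i j k = e i k j := by
    intro i j k; rw [he]; dsimp only; congr 1; exact propext ⟨sw' _ _ _, sw' _ _ _⟩
  have eii : ∀ i k, e i i k = 0 := fun i k => en _ _ _ fun h => irr _ _ _ h rfl
  -- maximiser
  obtain ⟨z, hz, hzmax⟩ := (isCompact_stdSimplex ℝ ι).exists_isMaxOn ⟨x₀, hx₀⟩
    (TT_cont e).continuousOn
  obtain ⟨M, hM⟩ : ∃ M : Set (ι → ℝ), M = {x | x ∈ stdSimplex ℝ ι ∧ ∀ y ∈ stdSimplex ℝ ι,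
    TT e y y y ≤ TT e x x x} := ⟨_, rfl⟩
  have hMne : M.Nonempty := ⟨z, by rw [hM]; exact ⟨hz, fun y hy => hzmax hy⟩⟩
  obtain ⟨x, hxM, hxmin⟩ := WellFounded.has_min
    (measure (fun x : ι → ℝ => (Finset.univ.filter fun i => x i ≠ 0).card)).wf M hMne
  rw [hM] at hxM
  obtain ⟨⟨hx0, hx1⟩, hmax⟩ := hxM
  refine (hmax _ hx₀).trans ?_
  obtain ⟨f, hf⟩ : ∃ f, f = TT e x x x := ⟨_, rfl⟩
  rw [← hf]
  obtain ⟨L, hL⟩ : ∃ L : ι → ℝ, L = fun i => ∑ j, ∑ k, e i j k * x j * x k := ⟨_, rfl⟩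
  have hfL : f = ∑ i, x i * L i := by
    rw [hf, hL]; unfold TT
    simp only [Finset.mul_sum]
    exact Finset.sum_congr rfl fun i _ => Finset.sum_congr rfl fun k _ =>
      Finset.sum_congr rfl fun k _ => by ring
  have hf0 : 0 ≤ f := by
    rw [hf]; unfold TT
    exact Finset.sum_nonneg fun i _ => Finset.sum_nonneg fun j _ => Finset.sum_nonneg fun k _ =>
      mul_nonneg (mul_nonneg (mul_nonneg (e0 _ _ _) (hx0 _)) (hx0 _)) (hx0 _)
  -- homogeneous bound
  have hhom : ∀ i (t : ℝ), 0 < t → 3 * t * L i ≤ f * ((1 + t) ^ 3 - 1) := by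
    intro i t ht
    have hy : (1 + t)⁻¹ • (x + Pi.single i t) ∈ stdSimplex ℝ ι := by
      constructor
      · intro j
        have : 0 ≤ (Pi.single i t : ι → ℝ) j := by
          by_cases h : j = i
          · subst h; simp [ht.le]
          · simp [Pi.single_eq_of_ne h]
        simp only [Pi.smul_apply, Pi.add_apply, smul_eq_mul]
        have := hx0 j
        positivity
      · simp only [Pi.smul_apply, Pi.add_apply, smul_eq_mul, ← Finset.mul_sum,
          Finset.sum_add_distrib, hx1]
        simp
        field_simp
    have h1 := hmax _ hy
    rw [TT_smul, TT_cube e hs hs', TT_single1, TT_single2, TT_single2] at h1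
    simp only [eii, zero_mul, Finset.sum_const_zero, mul_zero, add_zero] at h1
    have h2 : ∑ j, ∑ k, e i j k * x j * x k = L i := by rw [hL]
    rw [h2, ← hf, inv_pow, inv_mul_le_iff₀ (by positivity)] at h1
    linarith
  have hLf : ∀ i, L i ≤ f := by
    intro i
    by_contra hc
    push Not at hc
    -- 3 t L ≤ f (3t + 3t^2 + t^3)
    have h3 : ∀ t : ℝ, 0 < t → t < 1 → 3 * (L i - f) ≤ 4 * f * t := by
      intro t ht ht1
      have h4 := hhom i t ht
      have h5 : t * (3 * (L i - f)) ≤ t * (4 * f * t) := by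
        have : f * t ^ 3 ≤ f * t ^ 2 := by
          apply mul_le_mul_of_nonneg_left _ hf0
          nlinarith [sq_nonneg t]
        nlinarith
      exact le_of_mul_le_mul_left h5 ht
    have h6 := h3 (min (1/2) ((L i - f) / (4 * f + 1))) (lt_min (by norm_num)
      (div_pos (by linarith) (by linarith))) (lt_of_le_of_lt (min_le_left _ _) (by norm_num))
    have h7 : 4 * f * min (1/2) ((L i - f) / (4 * f + 1)) ≤ 4 * f * ((L i - f) / (4 * f + 1)) :=
      mul_le_mul_of_nonneg_left (min_le_right _ _) (by linarith)
    have h8 : 4 * f * ((L i - f) / (4 * f + 1)) ≤ L i - f := by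
      rw [← mul_div_assoc, div_le_iff₀ (by linarith)]
      nlinarith
    linarith
  -- covering
  have cov0 : ∀ i j, i ≠ j → x i ≠ 0 → x j ≠ 0 → (∀ l, x l ≠ 0 → ¬ R i j l) → L j ≤ L i →
      False := by
    intro i j hij hi hj hno hLL
    obtain ⟨u, hu⟩ : ∃ u : ι → ℝ, u = Pi.single i (x j) + Pi.single j (- x j) := ⟨_, rfl⟩
    have hy : x + u ∈ stdSimplex ℝ ι := by
      constructor
      · intro l
        rw [hu]; simp only [Pi.add_apply]
        by_cases h1 : l = i
        · subst h1; simp [Pi.single_eq_of_ne hij]; linarith [hx0 l, hx0 j]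
        · by_cases h2 : l = j
          · subst h2; simp [Pi.single_eq_of_ne h1]
          · simp [Pi.single_eq_of_ne h1, Pi.single_eq_of_ne h2, hx0 l]
      · rw [hu]; simp [Finset.sum_add_distrib, hx1]
    have hz : ∀ a b : ι, (∀ l, x l ≠ 0 → ¬ R a b l) → ∑ k, e a b k * x k = 0 := by
      intro a b hab
      refine Finset.sum_eq_zero fun k _ => ?_
      by_cases h : x k = 0
      · simp [h]
      · rw [en _ _ _ (hab k h), zero_mul]
    have hij0 := hz i j hno
    have hji0 := hz j i (fun l hl h => hno l hl (sw _ _ _ h))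
    have huu : ∀ w : ι → ℝ, TT e u u w = - (x j) ^ 2 * (∑ k, e i j k * w k + ∑ k, e j i k * w k) := by
      intro w
      rw [hu]; simp only [TT_add1, TT_add2, TT_single2, eii]
      simp; ring
    have huuu : TT e u u u = 0 := by
      rw [huu, hu]
      have hh : ∀ a b : ι, ∑ k, e a b k * (Pi.single i (x j) + Pi.single j (-x j) : ι → ℝ) k =
          e a b i * x j - e a b j * x j := by
        intro a b
        simp only [Pi.add_apply, mul_add, Finset.sum_add_distrib, Pi.single_apply, mul_ite,
          mul_zero, Finset.sum_ite_eq', Finset.mem_univ, if_true]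
        simp; ring
      rw [hh, hh]
      have q1 : e i j i = 0 := by rw [hs', eii]
      have q2 : e i j j = 0 := by rw [hs, hs', eii]
      have q3 : e j i i = 0 := by rw [hs, hs', eii]
      have q4 : e j i j = 0 := by rw [hs', eii]
      rw [q1, q2, q3, q4]; ring
    have hval : TT e (x + u) (x + u) (x + u) = f + 3 * (x j * (L i - L j)) := by
      rw [TT_cube e hs hs', huuu, huu x, hij0, hji0, ← hf]
      have : TT e u x x = x j * (L i - L j) := by
        rw [hu, TT_add1, TT_single1, TT_single1, hL]; ring
      rw [this]; ring
    have hin : x + u ∈ M := by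
      rw [hM]
      refine ⟨hy, fun y hy' => (hmax y hy').trans ?_⟩
      rw [hval, ← hf]
      have := mul_nonneg (hx0 j) (sub_nonneg.2 hLL)
      linarith
    apply hxmin _ hin
    show (Finset.univ.filter fun l => (x + u) l ≠ 0).card < (Finset.univ.filter fun l => x l ≠ 0).card
    apply Finset.card_lt_card
    rw [Finset.ssubset_iff_of_subset]
    · refine ⟨j, by simp [hj], ?_⟩
      rw [hu]; simp [Pi.single_eq_of_ne hij.symm]
    · intro l hl
      rw [Finset.mem_filter] at hl ⊢
      refine ⟨hl.1, fun h0 => hl.2 ?_⟩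
      have h1 : l ≠ i := by rintro rfl; exact hi h0
      have h2 : l ≠ j := by rintro rfl; exact hj h0
      rw [hu]; simp [Pi.single_eq_of_ne h1, Pi.single_eq_of_ne h2, h0]
  have cov : ∀ i j, i ≠ j → x i ≠ 0 → x j ≠ 0 → ∃ l, x l ≠ 0 ∧ R i j l := by
    intro i j hij hi hj
    by_contra hc
    push Not at hc
    rcases le_total (L j) (L i) with h | h
    · exact cov0 i j hij hi hj hc h
    · exact cov0 j i hij.symm hj hi (fun l hl h => hc l hl (sw _ _ _ h)) h
  -- uniqueness of the third vertex
  have uniq : ∀ i j k l, x i ≠ 0 → x j ≠ 0 → x k ≠ 0 → x l ≠ 0 → R i j k → R i j l → k = l := by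
    intro i j k l hi hj hk hl h1 h2
    by_contra hkl
    obtain ⟨p, hp, h3⟩ := cov k l hkl hk hl
    by_cases hpi : p = i
    · subst hpi
      exact hK p j k l h1 h2 (sw _ _ _ (sw' _ _ _ h3))
    by_cases hpj : p = j
    · subst hpj
      exact hK p i k l (sw _ _ _ h1) (sw _ _ _ h2) (sw _ _ _ (sw' _ _ _ h3))
    obtain ⟨q, -, h4⟩ := cov i p (Ne.symm hpi) hi hp
    obtain ⟨r, -, h5⟩ := cov j p (Ne.symm hpj) hj hp
    exact hF i j k l p q r h1 h2 h3 h4 h5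
  -- final estimate
  obtain ⟨q, hq⟩ : ∃ q, q = ∑ i, x i ^ 2 := ⟨_, rfl⟩
  obtain ⟨W, hW⟩ : ∃ W, W = ∑ i, ∑ j, ∑ k, e i j k * x i * x j * x k ^ 2 := ⟨_, rfl⟩
  obtain ⟨S, hS⟩ : ∃ S, S = ∑ i, ∑ j, ∑ k, (if x k = 0 then 0 else e i j k * x i * x j) := ⟨_, rfl⟩
  have hquad : ∀ c : ℝ, 0 ≤ W - 2 * c * f + c ^ 2 * S := by
    intro c
    have : W - 2 * c * f + c ^ 2 * S = ∑ i, ∑ j, ∑ k,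
        (if x k = 0 then 0 else e i j k * x i * x j * (x k - c) ^ 2) := by
      rw [hW, hf, hS]; unfold TT
      simp only [Finset.mul_sum, ← Finset.sum_sub_distrib, ← Finset.sum_add_distrib]
      refine Finset.sum_congr rfl fun i _ => Finset.sum_congr rfl fun j _ =>
        Finset.sum_congr rfl fun k _ => ?_
      split_ifs with h
      · rw [h]; ring
      · ring
    rw [this]
    refine Finset.sum_nonneg fun i _ => Finset.sum_nonneg fun j _ => Finset.sum_nonneg fun k _ => ?_
    split_ifs
    · exact le_rfl
    · exact mul_nonneg (mul_nonneg (mul_nonneg (e0 _ _ _) (hx0 _)) (hx0 _)) (sq_nonneg _)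
  have hS1 : S ≤ 1 - q := by
    have h1 : 1 - q = ∑ i, ∑ j, (if i = j then 0 else x i * x j) := by
      have : ∑ i, ∑ j, x i * x j = 1 := by
        simp only [← Finset.mul_sum, hx1, mul_one]
      rw [hq, ← this, ← Finset.sum_sub_distrib]
      refine Finset.sum_congr rfl fun i _ => ?_
      have : x i ^ 2 = ∑ j, (if i = j then x i * x j else 0) := by simp [sq]
      rw [this, ← Finset.sum_sub_distrib]
      refine Finset.sum_congr rfl fun j _ => ?_
      split_ifs <;> ring
    rw [h1, hS]
    refine Finset.sum_le_sum fun i _ => Finset.sum_le_sum fun j _ => ?_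
    split_ifs with hij
    · subst hij; simp [eii]
    by_cases hi : x i = 0
    · simp [hi]
    by_cases hj : x j = 0
    · simp [hj]
    by_cases hex : ∃ k, x k ≠ 0 ∧ R i j k
    · obtain ⟨k, hk, hR⟩ := hex
      rw [Finset.sum_eq_single k]
      · rw [if_neg hk, e1 _ _ _ hR, one_mul]
      · intro b _ hb
        split_ifs with hb0
        · rfl
        · rw [en i j b fun h => hb (uniq i j b k hi hj hb0 hk h hR)]; simp
      · simp
    · push Not at hex
      rw [Finset.sum_eq_zero]
      · exact mul_nonneg (hx0 _) (hx0 _)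
      · intro k _
        split_ifs with hk
        · rfl
        · rw [en i j k (hex k hk)]; simp
  have hWL : W = ∑ k, x k ^ 2 * L k := by
    rw [hW, hL]
    have : ∀ k, x k ^ 2 * (∑ i, ∑ j, e k i j * x i * x j) =
        ∑ i, ∑ j, e i j k * x i * x j * x k ^ 2 := by
      intro k
      simp only [Finset.mul_sum]
      refine Finset.sum_congr rfl fun i _ => Finset.sum_congr rfl fun j _ => ?_
      rw [hs k i j, hs' i k j]; ring
    simp only [this]
    rw [Finset.sum_comm' (t' := Finset.univ) (s' := fun _ => Finset.univ) (by simp)]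
    rw [Finset.sum_comm]
    conv_rhs => rw [Finset.sum_comm]
    refine Finset.sum_congr rfl fun j _ => ?_
    rw [Finset.sum_comm]
  have hWq : W ≤ q * f := by
    rw [hWL, hq, Finset.sum_mul]
    exact Finset.sum_le_sum fun k _ => mul_le_mul_of_nonneg_left (hLf k) (sq_nonneg _)
  have hW3 : W ≤ f / 3 := by
    obtain ⟨y, hy⟩ : ∃ y : ι → ℝ, y = fun i => x i ^ 2 := ⟨_, rfl⟩
    have w1 : W = TT e x x y := by rw [hW, hy]; rfl
    have w2 : W = TT e x y x := by rw [w1, TT_sw23 e hs']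
    have w3 : W = TT e y x x := by rw [w2, TT_sw12 e hs]
    have : W + W + W ≤ f := by
      nth_rewrite 1 [w1]; nth_rewrite 1 [w2]; nth_rewrite 1 [w3]
      rw [hf, hy]; unfold TT
      simp only [← Finset.sum_add_distrib]
      refine Finset.sum_le_sum fun i _ => Finset.sum_le_sum fun j _ => Finset.sum_le_sum fun k _ => ?_
      by_cases hR : R i j k
      · have hij := irr _ _ _ hR
        have hjk := irr _ _ _ (sw' _ _ _ (sw _ _ _ hR))
        have hik := irr _ _ _ (sw' _ _ _ hR)
        have h3 : x i + x j + x k ≤ 1 := by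
          rw [← hx1]
          have := Finset.sum_le_sum_of_subset_of_nonneg (f := x)
            (Finset.subset_univ ({i, j, k} : Finset ι)) (fun a _ _ => hx0 a)
          rw [Finset.sum_insert (by simp [hij, hik]), Finset.sum_pair hjk] at this
          linarith
        rw [e1 _ _ _ hR]
        have := mul_nonneg (mul_nonneg (hx0 i) (hx0 j)) (hx0 k)
        nlinarith
      · rw [en _ _ _ hR]; simp
    linarith
  have hq0 : 0 ≤ q := by rw [hq]; exact Finset.sum_nonneg fun i _ => sq_nonneg _
  rcases le_total q (1/3) with h | h
  · have h1 := hquad q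
    rcases hq0.eq_or_lt with h0 | h0
    · exfalso
      rw [hq] at h0
      have : ∀ i, x i = 0 := by
        intro i
        have := (Finset.sum_eq_zero_iff_of_nonneg (fun i _ => sq_nonneg (x i))).1 h0.symm i
          (Finset.mem_univ i)
        exact pow_eq_zero_iff (two_ne_zero) |>.1 this
      simp [this] at hx1
    · have : q * f ≤ q * (q * (1 - q)) := by nlinarith [sq_nonneg q]
      have := le_of_mul_le_mul_left this h0
      nlinarith
  · have h1 := hquad (1/3)
    nlinarith

/-! Part 3: counting -/

lemma isHomOn_iff {α β : Type*} [DecidableEq β] (G : Set (Finset α)) (H : Set (Finset β))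
    (φ : α → β) : IsHomOn G H φ ↔ ∀ e ∈ G, (e.image φ).card = 3 ∧ e.image φ ∈ H := by
  unfold IsHomOn
  have : (fun a b : β => Classical.propDecidable (a = b)) = ‹DecidableEq β› :=
    Subsingleton.elim _ _
  rw [this]

lemma containsCopy_iff {α β : Type*} [DecidableEq β] (G : Set (Finset α)) (H : Set (Finset β)) :
    ContainsCopy G H ↔ ∃ φ : α → β, Function.Injective φ ∧ ∀ e ∈ G, e.image φ ∈ H := by
  unfold ContainsCopy
  have : (fun a b : β => Classical.propDecidable (a = b)) = ‹DecidableEq β› :=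
    Subsingleton.elim _ _
  rw [this]

lemma mem_F (e : Finset (Fin 4 × Fin 7)) : e ∈ F ↔
    e.card = 3 ∧ e.image Prod.fst ∈ K4minus ∧ e.image Prod.snd ∈ Fstar := by
  unfold F ProdGraph
  have h1 : (fun a b : Fin 4 => Classical.propDecidable (a = b)) = instDecidableEqFin 4 :=
    Subsingleton.elim _ _
  have h2 : (fun a b : Fin 7 => Classical.propDecidable (a = b)) = instDecidableEqFin 7 :=
    Subsingleton.elim _ _
  rw [h1, h2]
  exact Iff.rfl

noncomputable def tri {α : Type*} [Fintype α] [DecidableEq α] (H : Set (Finset α)) : ℝ :=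
  ∑ i, ∑ j, ∑ k, (if ({i, j, k} : Finset α) ∈ H then (1 : ℝ) else 0)

lemma three_ne {α : Type*} [DecidableEq α] {a b c : α} (h : ({a, b, c} : Finset α).card = 3) :
    a ≠ b ∧ a ≠ c ∧ b ≠ c := by
  refine ⟨?_, ?_, ?_⟩
  · rintro rfl
    have := Finset.card_le_two (a := a) (b := c)
    simp at h; omega
  · rintro rfl
    have := Finset.card_le_two (a := b) (b := a)
    rw [Finset.insert_comm] at h; simp at h; omega
  · rintro rfl
    have := Finset.card_le_two (a := a) (b := b)
    simp at h; omega

lemma no_hom_count {α : Type*} [Fintype α] [DecidableEq α] (J : Set (Finset α)) (h3 : IsThreeGraph J)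
    (hno : ∀ θ : Fin 4 × Fin 7 → α, ¬ IsHomOn F J θ) :
    tri J ≤ 2 / 9 * (Fintype.card α : ℝ) ^ 3 := by
  rcases isEmpty_or_nonempty α with hα | hα
  · simp [tri]
  have hm : (0 : ℝ) < Fintype.card α := by exact_mod_cast Fintype.card_pos
  have key := lagrangian (fun i j k : α => ({i, j, k} : Finset α) ∈ J)
    (fun i j k h => by rwa [Finset.insert_comm]) (fun i j k h => by rwa [Finset.pair_comm])
    (fun i j k h => (three_ne (h3 _ h)).1)
    (by
      intro i j k l h1 h2 h4
      apply hno ((![i, j, k, l] : Fin 4 → α) ∘ Prod.fst)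
      rw [isHomOn_iff]
      intro e he
      rw [mem_F] at he
      rw [← Finset.image_image]
      suffices h : (e.image Prod.fst).image (![i, j, k, l] : Fin 4 → α) ∈ J from ⟨h3 _ h, h⟩
      obtain ⟨-, he, -⟩ := he
      rcases he with he | he | he <;> rw [he] <;> simpa [Finset.image_insert])
    (by
      intro i j k l p q r h1 h2 h4 h5 h6
      apply hno ((![i, j, k, l, p, q, r] : Fin 7 → α) ∘ Prod.snd)
      rw [isHomOn_iff]
      intro e he
      rw [mem_F] at he
      rw [← Finset.image_image]
      suffices h : (e.image Prod.snd).image (![i, j, k, l, p, q, r] : Fin 7 → α) ∈ J from ⟨h3 _ h, h⟩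
      obtain ⟨-, -, he⟩ := he
      rcases he with he | he | he | he | he <;> rw [he] <;> simpa [Finset.image_insert])
    (fun _ => (Fintype.card α : ℝ)⁻¹)
    ⟨fun _ => by positivity, by simp [hm.ne']⟩
  have : TT (fun i j k : α => if ({i, j, k} : Finset α) ∈ J then (1 : ℝ) else 0)
      (fun _ => (Fintype.card α : ℝ)⁻¹) (fun _ => (Fintype.card α : ℝ)⁻¹)
      (fun _ => (Fintype.card α : ℝ)⁻¹) = tri J * ((Fintype.card α : ℝ)⁻¹) ^ 3 := by
    unfold TT tri
    simp only [Finset.sum_mul]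
    exact Finset.sum_congr rfl fun i _ => Finset.sum_congr rfl fun j _ =>
      Finset.sum_congr rfl fun k _ => by ring
  rw [this, inv_pow, ← div_eq_mul_inv, div_le_iff₀ (by positivity)] at key
  exact key

lemma tri_eq {α : Type*} [Fintype α] [DecidableEq α] (H : Set (Finset α)) (h3 : IsThreeGraph H) :
    tri H = 6 * (H.ncard : ℝ) := by
  have h1 : ∀ i j k : α, (if ({i, j, k} : Finset α) ∈ H then (1 : ℝ) else 0) =
      ∑ e ∈ H.toFinset, if ({i, j, k} : Finset α) = e then (1 : ℝ) else 0 := by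
    intro i j k
    simp
  have h2 : tri H = ∑ e ∈ H.toFinset, ∑ i, ∑ j, ∑ k,
      if ({i, j, k} : Finset α) = e then (1 : ℝ) else 0 := by
    unfold tri
    simp only [h1]
    rw [Finset.sum_comm]
    conv_rhs => rw [Finset.sum_comm]
    rw [Finset.sum_comm]
    refine Finset.sum_congr rfl fun i _ => ?_
    conv_rhs => rw [Finset.sum_comm]
    refine Finset.sum_congr rfl fun j _ => ?_
    rw [Finset.sum_comm]
  have h4 : ∀ e ∈ H.toFinset, (∑ i, ∑ j, ∑ k,
      if ({i, j, k} : Finset α) = e then (1 : ℝ) else 0) = 6 := by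
    intro e he
    obtain ⟨a, b, c, hab, hac, hbc, rfl⟩ := Finset.card_eq_three.1 (h3 e (by simpa using he))
    have h5 : ∀ i j k : α, (if ({i, j, k} : Finset α) = {a, b, c} then (1 : ℝ) else 0) =
        (if i = a then if j = b then if k = c then 1 else 0 else 0 else 0) +
        (if i = a then if j = c then if k = b then 1 else 0 else 0 else 0) +
        (if i = b then if j = a then if k = c then 1 else 0 else 0 else 0) +
        (if i = b then if j = c then if k = a then 1 else 0 else 0 else 0) +
        (if i = c then if j = a then if k = b then 1 else 0 else 0 else 0) +
        (if i = c then if j = b then if k = a then 1 else 0 else 0 else 0) := by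
      intro i j k
      by_cases hh : ({i, j, k} : Finset α) = {a, b, c}
      · rw [if_pos hh]
        have hc : ({i, j, k} : Finset α).card = 3 := by
          rw [hh]; exact Finset.card_eq_three.2 ⟨a, b, c, hab, hac, hbc, rfl⟩
        obtain ⟨n1, n2, n3⟩ := three_ne hc
        have i1 : i ∈ ({a, b, c} : Finset α) := by rw [← hh]; simp
        have j1 : j ∈ ({a, b, c} : Finset α) := by rw [← hh]; simp
        have k1 : k ∈ ({a, b, c} : Finset α) := by rw [← hh]; simp
        simp only [Finset.mem_insert, Finset.mem_singleton] at i1 j1 k1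
        clear hh hc h1 h2 he
        rcases i1 with rfl | rfl | rfl <;> rcases j1 with rfl | rfl | rfl <;>
          rcases k1 with rfl | rfl | rfl <;> simp_all
      · rw [if_neg hh]
        have g : ∀ u v w : α, ({u, v, w} : Finset α) = {a, b, c} →
            (if i = u then if j = v then if k = w then (1 : ℝ) else 0 else 0 else 0) = 0 := by
          intro u v w huvw
          split_ifs with q1 q2 q3
          · exact absurd (by rw [q1, q2, q3, huvw]) hh
          all_goals rfl
        have p1 : ({a, c, b} : Finset α) = {a, b, c} := by rw [Finset.pair_comm]
        have p2 : ({b, a, c} : Finset α) = {a, b, c} := by rw [Finset.insert_comm]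
        have p3 : ({b, c, a} : Finset α) = {a, b, c} := by rw [Finset.pair_comm, p2]
        have p4 : ({c, a, b} : Finset α) = {a, b, c} := by rw [Finset.insert_comm, p1]
        have p5 : ({c, b, a} : Finset α) = {a, b, c} := by rw [Finset.pair_comm, p4]
        rw [g _ _ _ rfl, g _ _ _ p1, g _ _ _ p2, g _ _ _ p3, g _ _ _ p4, g _ _ _ p5]
        norm_num
    simp only [h5, Finset.sum_add_distrib]
    simp
    norm_num
  rw [h2, Finset.sum_congr rfl h4, Finset.sum_const, Set.ncard_eq_toFinset_card']
  simp; ring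

/-! Part 4: blow-ups -/

lemma erdos (l : ℕ) (r : ℕ) : ∀ c : ℝ, 0 < c → ∃ N : ℕ, ∀ n : ℕ, N ≤ n →
    ∀ S : Finset (Fin r → Fin n), c * (n : ℝ) ^ r ≤ S.card →
    ∃ T : Fin r → Finset (Fin n), (∀ i, l ≤ (T i).card) ∧ ∀ g : Fin r → Fin n,
      (∀ i, g i ∈ T i) → g ∈ S := by
  induction r with
  | zero =>
    intro c hc
    refine ⟨0, fun n _ S hS => ⟨fun i => i.elim0, fun i => i.elim0, fun g _ => ?_⟩⟩
    have : 0 < S.card := by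
      have : (0 : ℝ) < S.card := by simp at hS; linarith
      exact_mod_cast this
    obtain ⟨g', hg'⟩ := Finset.card_pos.1 this
    rwa [Subsingleton.elim g g']
  | succ r ih =>
    intro c hc
    obtain ⟨w, hw⟩ := exists_nat_gt (4 * l / c)
    have hw0 : (0 : ℝ) < w := lt_of_le_of_lt (by positivity) hw
    obtain ⟨N, hN⟩ := ih (c / 4 / 2 ^ w) (by positivity)
    obtain ⟨N', hN'⟩ := exists_nat_gt (2 * w / c)
    refine ⟨max N N' + 1, fun n hn S hS => ?_⟩
    have hn1 : N ≤ n := by omega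
    have hn2 : N' ≤ n := by omega
    have hn0 : (0 : ℝ) < n := by exact_mod_cast (by omega : 0 < n)
    have hnw : (w : ℝ) ≤ c / 2 * n := by
      have : (N' : ℝ) ≤ n := by exact_mod_cast hn2
      have h2 : 2 * w / c < n := by linarith
      rw [div_lt_iff₀ hc] at h2
      linarith
    obtain ⟨Sx, hSx⟩ : ∃ Sx : Fin n → Finset (Fin r → Fin n), Sx = fun x =>
      Finset.univ.filter fun y => (Fin.cons x y : Fin (r + 1) → Fin n) ∈ S := ⟨_, rfl⟩
    have hsum : (S.card : ℝ) = ∑ x, ((Sx x).card : ℝ) := by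
      have h1 : S.card = ∑ x, (Sx x).card := by
        rw [← Finset.card_sigma]
        symm
        refine Finset.card_bij (fun p _ => (Fin.cons p.1 p.2 : Fin (r + 1) → Fin n)) ?_ ?_ ?_
        · rintro ⟨x, y⟩ h; simpa [hSx] using h
        · rintro ⟨x, y⟩ _ ⟨x', y'⟩ _ h
          have := Fin.cons_injective2 h
          obtain ⟨h1, h2⟩ := this
          dsimp only at h1 h2
          rw [h1, h2]
        · intro g hg
          refine ⟨⟨g 0, Fin.tail g⟩, ?_, ?_⟩
          · simp [hSx, Fin.cons_self_tail, hg]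
          · simp [Fin.cons_self_tail]
      exact_mod_cast h1
    have hcard : ∀ x, ((Sx x).card : ℝ) ≤ (n : ℝ) ^ r := by
      intro x
      have : (Sx x).card ≤ n ^ r := by
        simpa using Finset.card_le_univ (Sx x)
      exact_mod_cast this
    obtain ⟨X, hX⟩ : ∃ X : Finset (Fin n), X = Finset.univ.filter fun x =>
      c / 2 * (n : ℝ) ^ r ≤ (Sx x).card := ⟨_, rfl⟩
    have hnr : (0 : ℝ) < (n : ℝ) ^ r := by positivity
    have hXw : w ≤ X.card := by
      have h1 : (S.card : ℝ) ≤ ∑ x : Fin n, ((if x ∈ X then (n : ℝ) ^ r else 0) + c / 2 * (n : ℝ) ^ r) := by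
        rw [hsum]
        refine Finset.sum_le_sum fun x _ => ?_
        split_ifs with h
        · have := hcard x
          have : 0 ≤ c / 2 * (n : ℝ) ^ r := by positivity
          linarith [hcard x]
        · simp only [hX, Finset.mem_filter, Finset.mem_univ, true_and, not_le] at h
          linarith
      rw [Finset.sum_add_distrib, ← Finset.sum_filter] at h1
      simp at h1
      have h2 : c / 2 * n * (n : ℝ) ^ r ≤ X.card * (n : ℝ) ^ r := by
        rw [pow_succ] at hS
        nlinarith
      have h3 := le_of_mul_le_mul_right h2 hnr
      exact_mod_cast hnw.trans h3
    obtain ⟨W, hWX, hWw⟩ := Finset.exists_subset_card_eq hXw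
    obtain ⟨Ny, hNy⟩ : ∃ Ny : (Fin r → Fin n) → Finset (Fin n), Ny = fun y =>
      W.filter fun x => (Fin.cons x y : Fin (r + 1) → Fin n) ∈ S := ⟨_, rfl⟩
    obtain ⟨Y, hY⟩ : ∃ Y : Finset (Fin r → Fin n), Y = Finset.univ.filter fun y =>
      l ≤ (Ny y).card := ⟨_, rfl⟩
    have hdc : ∑ y, ((Ny y).card : ℝ) = ∑ x ∈ W, ((Sx x).card : ℝ) := by
      have : ∑ y, (Ny y).card = ∑ x ∈ W, (Sx x).card := by
        simp only [hNy, hSx, Finset.card_filter]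
        rw [Finset.sum_comm]
      exact_mod_cast this
    have hlow : w * (c / 2 * (n : ℝ) ^ r) ≤ ∑ x ∈ W, ((Sx x).card : ℝ) := by
      have : ∑ x ∈ W, (c / 2 * (n : ℝ) ^ r) ≤ ∑ x ∈ W, ((Sx x).card : ℝ) := by
        refine Finset.sum_le_sum fun x hx => ?_
        have := hWX hx
        rw [hX] at this
        exact (Finset.mem_filter.1 this).2
      simpa [hWw] using this
    have hup : ∑ y, ((Ny y).card : ℝ) ≤ w * Y.card + l * (n : ℝ) ^ r := by
      have h1 : ∑ y, ((Ny y).card : ℝ) ≤ ∑ y : Fin r → Fin n, ((if y ∈ Y then (w : ℝ) else 0) + l) := by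
        refine Finset.sum_le_sum fun y _ => ?_
        split_ifs with h
        · have : (Ny y).card ≤ w := by
            rw [← hWw, hNy]; exact Finset.card_filter_le _ _
          have : ((Ny y).card : ℝ) ≤ w := by exact_mod_cast this
          have : (0 : ℝ) ≤ l := by positivity
          linarith
        · simp only [hY, Finset.mem_filter, Finset.mem_univ, true_and, not_le] at h
          have : ((Ny y).card : ℝ) ≤ l := by exact_mod_cast h.le
          linarith
      rw [Finset.sum_add_distrib, ← Finset.sum_filter] at h1
      simp at h1
      linarith
    have hYc : c / 4 * (n : ℝ) ^ r ≤ Y.card := by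
      have h1 : w * (c / 2 * (n : ℝ) ^ r) ≤ w * Y.card + l * (n : ℝ) ^ r := by linarith
      have h2 : (l : ℝ) ≤ w * (c / 4) := by
        rw [div_lt_iff₀ hc] at hw; linarith
      have h3 : w * (c / 4 * (n : ℝ) ^ r) ≤ w * (Y.card : ℝ) := by nlinarith
      exact le_of_mul_le_mul_left h3 hw0
    have hpig : ∃ U ∈ W.powerset, c / 4 / 2 ^ w * (n : ℝ) ^ r ≤
        ((Y.filter fun y => Ny y = U).card : ℝ) := by
      by_contra hcon
      push Not at hcon
      have h1 : Y.card = ∑ U ∈ W.powerset, (Y.filter fun y => Ny y = U).card := by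
        apply Finset.card_eq_sum_card_fiberwise
        intro y _
        simp only [hNy, Finset.coe_powerset, Set.mem_preimage, Set.mem_powerset_iff,
          Finset.coe_subset]
        exact Finset.filter_subset _ _
      have h2 : (Y.card : ℝ) = ∑ U ∈ W.powerset, ((Y.filter fun y => Ny y = U).card : ℝ) := by
        exact_mod_cast h1
      have h3 : (Y.card : ℝ) < ∑ U ∈ W.powerset, c / 4 / 2 ^ w * (n : ℝ) ^ r := by
        rw [h2]
        exact Finset.sum_lt_sum_of_nonempty ⟨∅, by simp⟩ hcon
      rw [Finset.sum_const, Finset.card_powerset, hWw, nsmul_eq_mul] at h3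
      push_cast at h3
      have : (2 : ℝ) ^ w * (c / 4 / 2 ^ w * (n : ℝ) ^ r) = c / 4 * (n : ℝ) ^ r := by
        field_simp
      linarith
    obtain ⟨U, -, hU⟩ := hpig
    obtain ⟨T, hT, hTS⟩ := hN n hn1 _ hU
    have hUl : l ≤ U.card := by
      have : (0 : ℝ) < ((Y.filter fun y => Ny y = U).card : ℝ) := lt_of_lt_of_le (by positivity) hU
      have : 0 < (Y.filter fun y => Ny y = U).card := by exact_mod_cast this
      obtain ⟨y, hy⟩ := Finset.card_pos.1 this
      obtain ⟨h1, rfl⟩ := Finset.mem_filter.1 hy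
      rw [hY] at h1
      exact (Finset.mem_filter.1 h1).2
    refine ⟨Fin.cons U T, ?_, ?_⟩
    · intro i
      refine Fin.cases ?_ (fun j => ?_) i
      · simpa using hUl
      · simpa using hT j
    · intro g hg
      have h1 : Fin.tail g ∈ Y.filter fun y => Ny y = U := by
        apply hTS
        intro i
        simpa [Fin.tail] using hg i.succ
      have h2 : g 0 ∈ U := by simpa using hg 0
      rw [← (Finset.mem_filter.1 h1).2, hNy] at h2
      have := (Finset.mem_filter.1 h2).2
      rwa [Fin.cons_self_tail] at this

lemma copy_of_blowup {m n : ℕ} (H : Set (Finset (Fin n))) (θ : Fin 4 × Fin 7 → Fin m)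
    (T : Fin m → Finset (Fin n)) (hT : ∀ i, m * 28 ≤ (T i).card)
    (hH : ∀ g : Fin m → Fin n, (∀ i, g i ∈ T i) → IsHomOn F H (g ∘ θ)) : ContainsCopy F H := by
  obtain ⟨f, hfi, hfT⟩ := (Finset.all_card_le_biUnion_card_iff_exists_injective
    (fun p : Fin m × (Fin 4 × Fin 7) => T p.1)).1 (by
      intro s
      rcases s.eq_empty_or_nonempty with rfl | ⟨p, hp⟩
      · simp
      · calc s.card ≤ Fintype.card (Fin m × (Fin 4 × Fin 7)) := Finset.card_le_univ s
          _ = m * 28 := by simp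
          _ ≤ (T p.1).card := hT _
          _ ≤ _ := Finset.card_le_card
            (Finset.subset_biUnion_of_mem (fun p : Fin m × (Fin 4 × Fin 7) => T p.1) hp))
  simp only [isHomOn_iff] at hH
  rw [containsCopy_iff]
  refine ⟨fun v => f (θ v, v), fun v v' h => ?_, fun e he => ?_⟩
  · have := hfi h
    simpa using congrArg Prod.snd this
  · have h0 := hH (fun i => f (i, (0, 0))) (fun i => hfT _) e he
    have hinj : Set.InjOn θ e := by
      have h1 : Set.InjOn ((fun i => f (i, (0, 0))) ∘ θ) (e : Set (Fin 4 × Fin 7)) := by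
        rw [← Finset.card_image_iff, h0.1, ((mem_F e).1 he).1]
      intro a ha b hb hab
      exact h1 ha hb (by simp [hab])
    let g : Fin m → Fin n := fun i =>
      if h : ∃ v ∈ e, θ v = i then f (i, h.choose) else f (i, (0, 0))
    have hg : ∀ i, g i ∈ T i := by
      intro i
      by_cases h : ∃ v ∈ e, θ v = i
      · simp only [g, dif_pos h]; exact hfT (i, h.choose)
      · simp only [g, dif_neg h]; exact hfT (i, (0, 0))
    have h2 := (hH g hg e he).2
    have h3 : e.image (g ∘ θ) = e.image fun v => f (θ v, v) := by
      apply Finset.image_congr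
      intro v hv
      have h : ∃ v' ∈ e, θ v' = θ v := ⟨v, hv, rfl⟩
      have h4 : h.choose = v := hinj h.choose_spec.1 hv h.choose_spec.2
      simp only [Function.comp, g, dif_pos h]
      rw [h4]
    rwa [h3] at h2

/-! Part 5: the upper bound on the Turan number -/

lemma card_fix {m n : ℕ} (i j k : Fin m) (hij : i ≠ j) (hik : i ≠ k) (hjk : j ≠ k)
    (u v w : Fin n) :
    (Finset.univ.filter fun g : Fin m → Fin n => g i = u ∧ g j = v ∧ g k = w).card =
      n ^ (m - 3) := by
  have h1 : (Finset.univ.filter fun g : Fin m → Fin n => g i = u ∧ g j = v ∧ g k = w) =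
      Fintype.piFinset (fun a => if a = i then {u} else if a = j then {v} else
        if a = k then {w} else Finset.univ) := by
    ext g
    simp only [Finset.mem_filter, Finset.mem_univ, true_and, Fintype.mem_piFinset]
    constructor
    · rintro ⟨rfl, rfl, rfl⟩ a
      split_ifs with q1 q2 q3
      · simp [q1]
      · simp [q2]
      · simp [q3]
      · simp
    · intro h
      have a1 := h i
      have a2 := h j
      have a3 := h k
      simp [hij.symm] at a1 a2
      simp [hik.symm, hjk.symm] at a3
      exact ⟨a1, a2, a3⟩
  rw [h1, Fintype.card_piFinset]
  have h2 : ∀ a : Fin m, (if a = i then ({u} : Finset (Fin n)) else if a = j then {v} else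
        if a = k then {w} else Finset.univ).card =
        if a ∈ ({i, j, k} : Finset (Fin m)) then 1 else n := by
    intro a
    simp only [Finset.mem_insert, Finset.mem_singleton]
    split_ifs <;> simp_all
  simp only [h2]
  rw [Finset.prod_ite, Finset.prod_const_one, one_mul, Finset.prod_const]
  congr 1
  have h3 : ({i, j, k} : Finset (Fin m)).card = 3 :=
    Finset.card_eq_three.2 ⟨i, j, k, hij, hik, hjk, rfl⟩
  have h4 : (Finset.univ.filter fun a => a ∉ ({i, j, k} : Finset (Fin m))) =
      ({i, j, k} : Finset (Fin m))ᶜ := by ext a; simp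
  rw [h4, Finset.card_compl, h3, Fintype.card_fin]

/-- pull-back of a 3-graph -/
def pull {m n : ℕ} (H : Set (Finset (Fin n))) (g : Fin m → Fin n) : Set (Finset (Fin m)) :=
  {e | e.card = 3 ∧ e.image g ∈ H}

lemma mem_pull {m n : ℕ} (H : Set (Finset (Fin n))) (h3 : IsThreeGraph H) (g : Fin m → Fin n)
    (i j k : Fin m) : ({i, j, k} : Finset (Fin m)) ∈ pull H g ↔
      ({g i, g j, g k} : Finset (Fin n)) ∈ H := by
  have h1 : ({i, j, k} : Finset (Fin m)).image g = {g i, g j, g k} := by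
    simp [Finset.image_insert]
  unfold pull
  rw [Set.mem_setOf_eq, h1]
  refine ⟨fun h => h.2, fun h => ⟨?_, h⟩⟩
  obtain ⟨a, b, c⟩ := three_ne (h3 _ h)
  exact Finset.card_eq_three.2 ⟨i, j, k, fun h => a (by rw [h]), fun h => b (by rw [h]),
    fun h => c (by rw [h]), rfl⟩

lemma sum_pull {m n : ℕ} (H : Set (Finset (Fin n))) (h3 : IsThreeGraph H) :
    ((m : ℝ) ^ 3 - 3 * (m : ℝ) ^ 2) * ((n : ℝ) ^ (m - 3) * tri H) ≤
      ∑ g : Fin m → Fin n, tri (pull H g) := by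
  have hT0 : 0 ≤ (n : ℝ) ^ (m - 3) * tri H := by
    apply mul_nonneg (by positivity)
    unfold tri
    exact Finset.sum_nonneg fun i _ => Finset.sum_nonneg fun j _ => Finset.sum_nonneg fun k _ => by
      split_ifs <;> norm_num
  have h1 : ∑ g : Fin m → Fin n, tri (pull H g) = ∑ i, ∑ j, ∑ k, ∑ g : Fin m → Fin n,
      (if ({g i, g j, g k} : Finset (Fin n)) ∈ H then (1 : ℝ) else 0) := by
    unfold tri
    simp only [mem_pull H h3]
    rw [Finset.sum_comm]
    refine Finset.sum_congr rfl fun i _ => ?_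
    rw [Finset.sum_comm]
    refine Finset.sum_congr rfl fun j _ => ?_
    rw [Finset.sum_comm]
  have h2 : ∀ i j k : Fin m, i ≠ j → i ≠ k → j ≠ k → ∑ g : Fin m → Fin n,
      (if ({g i, g j, g k} : Finset (Fin n)) ∈ H then (1 : ℝ) else 0) =
      (n : ℝ) ^ (m - 3) * tri H := by
    intro i j k hij hik hjk
    have h4 : ∀ g : Fin m → Fin n, (if ({g i, g j, g k} : Finset (Fin n)) ∈ H then (1 : ℝ) else 0) =
        ∑ u, ∑ v, ∑ w, (if g i = u ∧ g j = v ∧ g k = w then (1 : ℝ) else 0) *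
          (if ({u, v, w} : Finset (Fin n)) ∈ H then (1 : ℝ) else 0) := by
      intro g
      rw [Finset.sum_eq_single (g i), Finset.sum_eq_single (g j), Finset.sum_eq_single (g k)]
      · simp
      · intro b _ hb; simp [hb.symm]
      · simp
      · intro b _ hb; simp [hb.symm]
      · simp
      · intro b _ hb; simp [hb.symm]
      · simp
    simp only [h4]
    unfold tri
    simp only [Finset.mul_sum]
    rw [Finset.sum_comm]
    refine Finset.sum_congr rfl fun u _ => ?_
    rw [Finset.sum_comm]
    refine Finset.sum_congr rfl fun v _ => ?_
    rw [Finset.sum_comm]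
    refine Finset.sum_congr rfl fun w _ => ?_
    rw [← Finset.sum_mul]
    congr 1
    rw [Finset.sum_boole, card_fix i j k hij hik hjk]
    push_cast; rfl
  have h5 : ∀ i j k : Fin m, (1 - (if i = j then (1 : ℝ) else 0) - (if i = k then (1 : ℝ) else 0) -
      (if j = k then (1 : ℝ) else 0)) * ((n : ℝ) ^ (m - 3) * tri H) ≤ ∑ g : Fin m → Fin n,
      (if ({g i, g j, g k} : Finset (Fin n)) ∈ H then (1 : ℝ) else 0) := by
    intro i j k
    have h0 : (0 : ℝ) ≤ ∑ g : Fin m → Fin n,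
      (if ({g i, g j, g k} : Finset (Fin n)) ∈ H then (1 : ℝ) else 0) :=
      Finset.sum_nonneg fun g _ => by split_ifs <;> norm_num
    by_cases a : i = j
    · refine le_trans (mul_nonpos_of_nonpos_of_nonneg ?_ hT0) h0
      rw [if_pos a]; split_ifs <;> norm_num
    by_cases b : i = k
    · refine le_trans (mul_nonpos_of_nonpos_of_nonneg ?_ hT0) h0
      rw [if_pos b]; split_ifs <;> norm_num
    by_cases c : j = k
    · refine le_trans (mul_nonpos_of_nonpos_of_nonneg ?_ hT0) h0
      rw [if_pos c]; split_ifs <;> norm_num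
    rw [h2 i j k a b c, if_neg a, if_neg b, if_neg c]; simp
  rw [h1]
  refine le_trans (le_of_eq ?_) (Finset.sum_le_sum fun i _ => Finset.sum_le_sum fun j _ =>
    Finset.sum_le_sum fun k _ => h5 i j k)
  simp only [← Finset.sum_mul, Finset.sum_sub_distrib]
  congr 1
  simp
  ring

lemma upper (ε : ℝ) (hε : 0 < ε) : ∃ N : ℕ, ∀ n : ℕ, N ≤ n → ∀ H : Set (Finset (Fin n)),
    IsThreeGraph H → ¬ ContainsCopy F H → tri H ≤ (2 / 9 + ε) * (n : ℝ) ^ 3 := by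
  obtain ⟨m0, hm0⟩ := exists_nat_gt (6 * (2 / 9 + ε) / ε)
  obtain ⟨m, hm⟩ : ∃ m, m = m0 + 3 := ⟨_, rfl⟩
  have hmm : 6 * (2 / 9 + ε) ≤ ε * m := by
    have : 6 * (2 / 9 + ε) / ε ≤ m := by rw [hm]; push_cast; linarith
    rw [div_le_iff₀ hε] at this; linarith
  have hmpos : (0 : ℝ) < m := by rw [hm]; positivity
  obtain ⟨K, hK⟩ : ∃ K : ℝ, K = Fintype.card (Fin 4 × Fin 7 → Fin m) := ⟨_, rfl⟩
  have hK0 : 0 < K := by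
    rw [hK]
    have : Nonempty (Fin m) := ⟨⟨0, by omega⟩⟩
    exact_mod_cast Fintype.card_pos
  obtain ⟨N, hN⟩ := erdos (m * 28) m (ε / 2 / K) (by positivity)
  refine ⟨N + 1, fun n hn H h3 hfree => ?_⟩
  by_contra hcon
  push Not at hcon
  have hn0 : (0 : ℝ) < n := by exact_mod_cast (by omega : 0 < n)
  obtain ⟨B, hB⟩ : ∃ B : Finset (Fin m → Fin n), B = Finset.univ.filter fun g =>
    ∃ θ : Fin 4 × Fin 7 → Fin m, IsHomOn F H (g ∘ θ) := ⟨_, rfl⟩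
  have hp3 : ∀ g : Fin m → Fin n, IsThreeGraph (pull H g) := fun g e he => he.1
  have htri : ∀ g : Fin m → Fin n, tri (pull H g) ≤ (m : ℝ) ^ 3 := by
    intro g
    unfold tri
    calc _ ≤ ∑ i : Fin m, ∑ j : Fin m, ∑ k : Fin m, (1 : ℝ) :=
          Finset.sum_le_sum fun i _ => Finset.sum_le_sum fun j _ => Finset.sum_le_sum fun k _ => by
            split_ifs <;> norm_num
      _ = (m : ℝ) ^ 3 := by simp; ring
  have hgood : ∀ g : Fin m → Fin n, g ∉ B → tri (pull H g) ≤ 2 / 9 * (m : ℝ) ^ 3 := by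
    intro g hg
    have := no_hom_count (pull H g) (hp3 g) (by
      intro θ hθ
      apply hg
      rw [hB, Finset.mem_filter]
      refine ⟨Finset.mem_univ _, θ, ?_⟩
      rw [isHomOn_iff] at hθ ⊢
      intro e he
      have h1 := (hθ e he).2.2
      rw [Finset.image_image] at h1
      exact ⟨h3 _ h1, h1⟩)
    simpa using this
  have hub : ∑ g : Fin m → Fin n, tri (pull H g) ≤ 2 / 9 * (m : ℝ) ^ 3 * (n : ℝ) ^ m +
      (m : ℝ) ^ 3 * B.card := by
    calc _ ≤ ∑ g : Fin m → Fin n, (2 / 9 * (m : ℝ) ^ 3 + if g ∈ B then (m : ℝ) ^ 3 else 0) := by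
          refine Finset.sum_le_sum fun g _ => ?_
          split_ifs with h
          · have := htri g
            have : (0 : ℝ) ≤ 2 / 9 * (m : ℝ) ^ 3 := by positivity
            linarith
          · linarith [hgood g h]
      _ = _ := by
          rw [Finset.sum_add_distrib, ← Finset.sum_filter]
          simp; ring
  have hlb := sum_pull (m := m) H h3
  have hnm : (n : ℝ) ^ m = (n : ℝ) ^ (m - 3) * (n : ℝ) ^ 3 := by
    rw [← pow_add]; congr 1; omega
  have hm3 : 0 ≤ (m : ℝ) ^ 3 - 3 * (m : ℝ) ^ 2 := by
    have : (3 : ℝ) ≤ m := by rw [hm]; push_cast; linarith [Nat.cast_nonneg (α := ℝ) m0]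
    have : 0 ≤ (m : ℝ) ^ 2 * (m - 3) := mul_nonneg (by positivity) (by linarith)
    nlinarith
  have h6 : ((m : ℝ) ^ 3 - 3 * (m : ℝ) ^ 2) * ((2 / 9 + ε) * (n : ℝ) ^ m) ≤
      2 / 9 * (m : ℝ) ^ 3 * (n : ℝ) ^ m + (m : ℝ) ^ 3 * B.card := by
    refine le_trans (mul_le_mul_of_nonneg_left ?_ hm3) (hlb.trans hub)
    rw [hnm]
    have := mul_le_mul_of_nonneg_left hcon.le (by positivity : (0 : ℝ) ≤ (n : ℝ) ^ (m - 3))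
    linarith
  have hBc : ε / 2 * (n : ℝ) ^ m ≤ B.card := by
    have hX : (0 : ℝ) < (n : ℝ) ^ m := by positivity
    have h7 : (m : ℝ) ^ 3 * (ε / 2 * (n : ℝ) ^ m) ≤ (m : ℝ) ^ 3 * B.card := by
      have h8 : 3 * (m : ℝ) ^ 2 * (2 / 9 + ε) ≤ (m : ℝ) ^ 3 * (ε / 2) := by
        have := mul_le_mul_of_nonneg_left hmm (by positivity : (0 : ℝ) ≤ (m : ℝ) ^ 2 / 2)
        nlinarith
      have h9 := mul_le_mul_of_nonneg_right h8 hX.le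
      nlinarith
    exact le_of_mul_le_mul_left h7 (by positivity)
  have hpig : ∃ θ : Fin 4 × Fin 7 → Fin m, ε / 2 / K * (n : ℝ) ^ m ≤
      ((Finset.univ.filter fun g : Fin m → Fin n => IsHomOn F H (g ∘ θ)).card : ℝ) := by
    by_contra hc
    push Not at hc
    have h1 : B.card ≤ ∑ θ : Fin 4 × Fin 7 → Fin m,
        (Finset.univ.filter fun g : Fin m → Fin n => IsHomOn F H (g ∘ θ)).card := by
      refine le_trans (Finset.card_le_card ?_) Finset.card_biUnion_le
      intro g hg
      rw [hB, Finset.mem_filter] at hg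
      obtain ⟨-, θ, hθ⟩ := hg
      simp only [Finset.mem_biUnion, Finset.mem_univ, true_and, Finset.mem_filter]
      exact ⟨θ, hθ⟩
    have h2 : (B.card : ℝ) ≤ ∑ θ : Fin 4 × Fin 7 → Fin m,
        ((Finset.univ.filter fun g : Fin m → Fin n => IsHomOn F H (g ∘ θ)).card : ℝ) := by
      exact_mod_cast h1
    have hne : Nonempty (Fin 4 × Fin 7 → Fin m) := ⟨fun _ => ⟨0, by omega⟩⟩
    have h4 := Finset.sum_lt_sum_of_nonempty (Finset.univ_nonempty (α := Fin 4 × Fin 7 → Fin m))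
      (fun θ _ => hc θ)
    rw [Finset.sum_const, Finset.card_univ, nsmul_eq_mul, ← hK] at h4
    have h5 : K * (ε / 2 / K * (n : ℝ) ^ m) = ε / 2 * (n : ℝ) ^ m := by field_simp
    linarith
  obtain ⟨θ, hθ⟩ := hpig
  obtain ⟨T, hT, hTS⟩ := hN n (by omega) _ hθ
  exact hfree (copy_of_blowup H θ T hT fun g hg => (Finset.mem_filter.1 (hTS g hg)).2)

lemma exF_upper (ε : ℝ) (hε : 0 < ε) : ∃ N : ℕ, ∀ n : ℕ, N ≤ n →
    6 * (exF n : ℝ) ≤ (2 / 9 + ε) * (n : ℝ) ^ 3 := by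
  obtain ⟨N, hN⟩ := upper ε hε
  refine ⟨N, fun n hn => ?_⟩
  rcases Set.eq_empty_or_nonempty {k | ∃ H : Set (Finset (Fin n)), IsThreeGraph H ∧
    ¬ ContainsCopy F H ∧ H.ncard = k} with h | h
  · unfold exF; rw [h]; simp; positivity
  · have hb : BddAbove {k | ∃ H : Set (Finset (Fin n)), IsThreeGraph H ∧
        ¬ ContainsCopy F H ∧ H.ncard = k} := by
      refine ⟨Nat.card (Finset (Fin n)), ?_⟩
      rintro k ⟨H, -, -, rfl⟩
      exact Set.ncard_le_card H
    obtain ⟨H, h1, h2, h4⟩ := Nat.sSup_mem h hb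
    have : exF n = H.ncard := h4.symm
    rw [this, ← tri_eq H h1]
    exact hN n hn H h1 h2

def HC {n : ℕ} (c : Fin n → Fin 6) : Set (Finset (Fin n)) :=
  {e | ∃ u v w, e = {u, v, w} ∧ RP (c u) (c v) (c w) = true}

lemma mem_HC {n : ℕ} (c : Fin n → Fin 6) (u v w : Fin n) :
    ({u, v, w} : Finset (Fin n)) ∈ HC c ↔ RP (c u) (c v) (c w) = true := by
  constructor
  · rintro ⟨u', v', w', he, h⟩
    obtain ⟨h1, h2, h3⟩ := RP_ne _ _ _ h
    have n1 : u' ≠ v' := fun h => h1 (by rw [h])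
    have n2 : u' ≠ w' := fun h => h2 (by rw [h])
    have n3 : v' ≠ w' := fun h => h3 (by rw [h])
    have hu : u' ∈ ({u, v, w} : Finset (Fin n)) := by rw [he]; simp
    have hv : v' ∈ ({u, v, w} : Finset (Fin n)) := by rw [he]; simp
    have hw : w' ∈ ({u, v, w} : Finset (Fin n)) := by rw [he]; simp
    simp only [Finset.mem_insert, Finset.mem_singleton] at hu hv hw
    have r1 := RP_rot (c u) (c v) (c w)
    have r2 := RP_rot (c v) (c w) (c u)
    have r3 := RP_swap (c u) (c v) (c w)
    have r4 := RP_rot (c v) (c u) (c w)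
    have r5 := RP_rot (c u) (c w) (c v)
    rcases hu with rfl | rfl | rfl <;> rcases hv with rfl | rfl | rfl <;>
      rcases hw with rfl | rfl | rfl <;> first | exact absurd rfl n1 | exact absurd rfl n2 | exact absurd rfl n3 | simp_all
  · intro h
    exact ⟨u, v, w, rfl, h⟩

lemma HC_three {n : ℕ} (c : Fin n → Fin 6) : IsThreeGraph (HC c) := by
  rintro e ⟨u, v, w, rfl, h⟩
  obtain ⟨h1, h2, h3⟩ := RP_ne _ _ _ h
  exact Finset.card_eq_three.2 ⟨u, v, w, fun h => h1 (by rw [h]), fun h => h2 (by rw [h]),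
    fun h => h3 (by rw [h]), rfl⟩

lemma kE_card (a b c : Fin 4) (h : kE a b c) : a ≠ b ∧ a ≠ c ∧ b ≠ c := by
  apply three_ne
  have h' : ({a, b, c} : Finset (Fin 4)) ∈ K4minus := h
  simp only [K4minus, Set.mem_insert_iff, Set.mem_singleton_iff] at h'
  rcases h' with h' | h' | h' <;> rw [h'] <;> rfl

lemma HC_free {n : ℕ} (c : Fin n → Fin 6) : ¬ ContainsCopy F (HC c) := by
  rw [containsCopy_iff]
  rintro ⟨φ, -, hφ⟩
  refine no_hom_P (fun p => c (φ p)) ?_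
  intro a b d x y z hk hf
  obtain ⟨n1, n2, n3⟩ := kE_card _ _ _ hk
  have := hφ {(a, x), (b, y), (d, z)} ((mem_F _).2 ⟨?_, ?_, ?_⟩)
  · simp only [Finset.image_insert, Finset.image_singleton] at this
    exact (mem_HC _ _ _ _).1 this
  · exact Finset.card_eq_three.2 ⟨_, _, _, fun h => n1 (congrArg Prod.fst h), fun h => n2 (congrArg Prod.fst h),
      fun h => n3 (congrArg Prod.fst h), rfl⟩
  · have h' : ({a, b, d} : Finset (Fin 4)) ∈ K4minus := hk
    simpa [Finset.image_insert] using h'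
  · have h' : ({x, y, z} : Finset (Fin 7)) ∈ Fstar := hf
    simpa [Finset.image_insert] using h'

lemma exists_col (s : Fin 6 → ℕ) (n : ℕ) (hn : n = ∑ a, s a) :
    ∃ c : Fin n → Fin 6, ∀ f : Fin 6 → ℝ, ∑ x, f (c x) = ∑ a, (s a : ℝ) * f a := by
  have e : Fin n ≃ (Σ a : Fin 6, Fin (s a)) := Fintype.equivOfCardEq (by simp [hn])
  refine ⟨fun x => (e x).1, fun f => ?_⟩
  rw [e.sum_comp (fun p => f p.1), Fintype.sum_sigma]
  simp

noncomputable def cd {n : ℕ} (H : Set (Finset (Fin n))) (x y : Fin n) : ℝ :=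
  ∑ z, if ({x, y, z} : Finset (Fin n)) ∈ H then 1 else 0

noncomputable def inv2 {n : ℕ} (H : Set (Finset (Fin n))) : ℝ :=
  ∑ x, ∑ y, (cd H x y) ^ 2

lemma cd_bd {n : ℕ} (H : Set (Finset (Fin n))) (x y : Fin n) : 0 ≤ cd H x y ∧ cd H x y ≤ n := by
  constructor
  · exact Finset.sum_nonneg fun z _ => by split_ifs <;> norm_num
  · calc cd H x y ≤ ∑ z : Fin n, (1 : ℝ) := Finset.sum_le_sum fun z _ => by split_ifs <;> norm_num
      _ = n := by simp

lemma inv2_diff {n : ℕ} (H H' : Set (Finset (Fin n))) :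
    |inv2 H - inv2 H'| ≤ 2 * n * tri (symmDiff H H') := by
  unfold inv2 tri
  rw [← Finset.sum_sub_distrib, Finset.mul_sum]
  refine (Finset.abs_sum_le_sum_abs _ _).trans (Finset.sum_le_sum fun x _ => ?_)
  rw [← Finset.sum_sub_distrib, Finset.mul_sum]
  refine (Finset.abs_sum_le_sum_abs _ _).trans (Finset.sum_le_sum fun y _ => ?_)
  have h1 := cd_bd H x y
  have h2 := cd_bd H' x y
  have h3 : |cd H x y - cd H' x y| ≤ ∑ z, if ({x, y, z} : Finset (Fin n)) ∈ symmDiff H H' then (1 : ℝ) else 0 := by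
    unfold cd
    rw [← Finset.sum_sub_distrib]
    refine (Finset.abs_sum_le_sum_abs _ _).trans (Finset.sum_le_sum fun z _ => ?_)
    simp only [Set.mem_symmDiff]
    by_cases a : ({x, y, z} : Finset (Fin n)) ∈ H <;> by_cases b : ({x, y, z} : Finset (Fin n)) ∈ H' <;> simp [a, b]
  have : cd H x y ^ 2 - cd H' x y ^ 2 = (cd H x y + cd H' x y) * (cd H x y - cd H' x y) := by ring
  rw [this, abs_mul]
  refine mul_le_mul ?_ h3 (abs_nonneg _) (by positivity)
  rw [abs_of_nonneg (by linarith)]; linarith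

lemma inv2_perm {n : ℕ} (H : Set (Finset (Fin n))) (ψ : Equiv.Perm (Fin n)) :
    inv2 ((fun e => e.image ⇑ψ) '' H) = inv2 H := by
  have key : ∀ x y z : Fin n, (({ψ x, ψ y, ψ z} : Finset (Fin n)) ∈ ((fun e => e.image ⇑ψ) '' H)) ↔
      ({x, y, z} : Finset (Fin n)) ∈ H := by
    intro x y z
    have : ({ψ x, ψ y, ψ z} : Finset (Fin n)) = (fun e : Finset (Fin n) => e.image ⇑ψ) {x, y, z} := by
      simp [Finset.image_insert]
    rw [this]
    exact (Finset.image_injective ψ.injective).mem_set_image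
  unfold inv2
  rw [← Equiv.sum_comp ψ]
  refine Finset.sum_congr rfl fun x _ => ?_
  rw [← Equiv.sum_comp ψ]
  refine Finset.sum_congr rfl fun y _ => ?_
  unfold cd
  rw [← Equiv.sum_comp ψ]
  simp only [key]

noncomputable def rr (a b c : Fin 6) : ℝ := if RP a b c = true then 1 else 0

lemma cd_HC {n : ℕ} (c : Fin n → Fin 6) (s : Fin 6 → ℕ)
    (hc : ∀ f : Fin 6 → ℝ, ∑ x, f (c x) = ∑ a, (s a : ℝ) * f a) (x y : Fin n) :
    cd (HC c) x y = ∑ d, (s d : ℝ) * rr (c x) (c y) d := by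
  unfold cd
  simp only [mem_HC]
  exact hc (fun d => rr (c x) (c y) d)

lemma tri_HC {n : ℕ} (c : Fin n → Fin 6) (s : Fin 6 → ℕ)
    (hc : ∀ f : Fin 6 → ℝ, ∑ x, f (c x) = ∑ a, (s a : ℝ) * f a) :
    tri (HC c) = ∑ a, (s a : ℝ) * ∑ b, (s b : ℝ) * ∑ d, (s d : ℝ) * rr a b d := by
  have : tri (HC c) = ∑ x, ∑ y, cd (HC c) x y := rfl
  rw [this]
  simp only [cd_HC c s hc]
  rw [← hc (fun a => ∑ b, (s b : ℝ) * ∑ d, (s d : ℝ) * rr a b d)]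
  refine Finset.sum_congr rfl fun x _ => ?_
  rw [← hc (fun b => ∑ d, (s d : ℝ) * rr (c x) b d)]

lemma inv2_HC {n : ℕ} (c : Fin n → Fin 6) (s : Fin 6 → ℕ)
    (hc : ∀ f : Fin 6 → ℝ, ∑ x, f (c x) = ∑ a, (s a : ℝ) * f a) :
    inv2 (HC c) = ∑ a, (s a : ℝ) * ∑ b, (s b : ℝ) * (∑ d, (s d : ℝ) * rr a b d) ^ 2 := by
  unfold inv2
  simp only [cd_HC c s hc]
  rw [← hc (fun a => ∑ b, (s b : ℝ) * (∑ d, (s d : ℝ) * rr a b d) ^ 2)]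
  refine Finset.sum_congr rfl fun x _ => ?_
  rw [← hc (fun b => (∑ d, (s d : ℝ) * rr (c x) b d) ^ 2)]

lemma vals (α β γ : ℝ) (s : Fin 6 → ℝ) (hs : s = ![α, β, β, α, γ, γ]) :
    (∑ a, s a * ∑ b, s b * ∑ d, s d * rr a b d) = 12 * γ * (α + β) ^ 2 ∧
    (∑ a, s a * ∑ b, s b * (∑ d, s d * rr a b d) ^ 2) =
      8 * γ ^ 2 * ((α + β) ^ 2 - α * β) + 8 * γ * (α + β) ^ 3 := by
  subst hs
  simp [Fin.sum_univ_six, rr, RP, RP1, bitP]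
  constructor <;> ring

lemma exists_H (T N j : ℕ) (hj : j ≤ T) : ∃ H : Set (Finset (Fin (6 * T * N))),
    IsThreeGraph H ∧ ¬ ContainsCopy F H ∧ (H.ncard : ℝ) = 8 * (T * N : ℝ) ^ 3 ∧
    inv2 H = 8 * (T * N : ℝ) ^ 2 * ((2 * (T * N : ℝ)) ^ 2 - (j * N) * ((2 * T - j) * N))
      + 8 * (T * N) * (2 * (T * N : ℝ)) ^ 3 := by
  obtain ⟨k, hk⟩ : ∃ k, 2 * T = j + k := ⟨2 * T - j, by omega⟩
  have hk' : (2 * T : ℝ) = j + k := by exact_mod_cast hk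
  let s : Fin 6 → ℕ := ![j * N, k * N, k * N, j * N, T * N, T * N]
  obtain ⟨c, hc⟩ := exists_col s (6 * T * N) (by
    simp [s, Fin.sum_univ_six]
    have : 6 * T * N = 2 * (2 * T) * N + 2 * T * N := by ring
    rw [this, hk]
    nlinarith [congrArg (· * N) hk])
  have hv := vals (j * N) (k * N) (T * N) (fun a => (s a : ℝ)) (by
    funext a; fin_cases a <;> simp [s])
  have hsum : (j * N + k * N : ℝ) = 2 * (T * N) := by rw [← add_mul, ← hk']; ring
  rw [hsum] at hv
  refine ⟨HC c, HC_three c, HC_free c, ?_, ?_⟩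
  · have h1 := tri_eq (HC c) (HC_three c)
    rw [tri_HC c s hc, hv.1] at h1
    linarith
  · rw [inv2_HC c s hc, hv.2]
    have : (2 * T - j : ℝ) = k := by linarith
    rw [this]

/-- For every positive integer `t`, the family `{F}` is not `t`-stable; that is,
the stability number `ξ({F})` is infinite. -/
theorem xi_F_infinite : ∀ t : ℕ, 0 < t → ¬ TStableF t := by
  rintro t ht ⟨G, hG, hst⟩
  have ht' : (1 : ℝ) ≤ t := by exact_mod_cast ht
  obtain ⟨ε, hε, N₀, hN₀⟩ := hst (1 / (10000 * (t : ℝ) ^ 2)) (by positivity)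
  obtain ⟨N₁, hN₁⟩ := exF_upper (2 / 9 * ε) (by positivity)
  obtain ⟨N, hN⟩ : ∃ N, N = max (max N₀ N₁) 1 := ⟨_, rfl⟩
  have hNp : 1 ≤ N := by omega
  have hNle : N ≤ 6 * t * N := Nat.le_mul_of_pos_left _ (by omega)
  have hn0 : N₀ ≤ 6 * t * N := by omega
  have hn1 : N₁ ≤ 6 * t * N := by omega
  have hNr : (1 : ℝ) ≤ N := by exact_mod_cast hNp
  have hex := hN₁ _ hn1
  have hcast : ((6 * t * N : ℕ) : ℝ) = 6 * (t * N) := by push_cast; ring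
  have hP : (1 : ℝ) ≤ t * N := by nlinarith
  obtain ⟨P, hPdef⟩ : ∃ P : ℝ, P = t * N := ⟨_, rfl⟩
  have hall : ∀ j : Fin (t + 1), ∃ i : Fin t, ∃ v : ℝ, v = 8 * (t * N : ℝ) ^ 2 *
      ((2 * (t * N : ℝ)) ^ 2 - (j.val * N) * ((2 * t - j.val) * N))
      + 8 * (t * N) * (2 * (t * N : ℝ)) ^ 3 ∧
      |v - inv2 (G (6 * t * N) i)| ≤ 12 * (6 * (t * N)) * (1 / (10000 * (t : ℝ) ^ 2) * (6 * (t * N)) ^ 3) := by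
    intro j
    obtain ⟨H, h3, hfree, hcard, hinv⟩ := exists_H t N j.val (by omega)
    obtain ⟨i, ψ, hψ⟩ := hN₀ _ hn0 H h3 hfree (by
      rw [hcard]
      rw [hcast] at hex
      rw [← hPdef] at hex hP ⊢
      have hp3 : (0 : ℝ) < P ^ 3 := by positivity
      have hex' : (exF (6 * t * N) : ℝ) ≤ 8 * (1 + ε) * P ^ 3 := by linarith
      have h0 : (0 : ℝ) ≤ exF (6 * t * N) := Nat.cast_nonneg _
      rcases le_total ε 1 with h | h
      · have h1 := mul_le_mul_of_nonneg_left hex' (sub_nonneg.2 h)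
        have h2 : (1 - ε) * (8 * (1 + ε) * P ^ 3) = 8 * P ^ 3 - 8 * ε ^ 2 * P ^ 3 := by ring
        have h4 : 0 < 8 * ε ^ 2 * P ^ 3 := by positivity
        linarith
      · have h1 : (1 - ε) * (exF (6 * t * N) : ℝ) ≤ 0 :=
          mul_nonpos_of_nonpos_of_nonneg (by linarith) h0
        linarith)
    refine ⟨i, inv2 H, hinv, ?_⟩
    have hd := inv2_diff ((fun e => e.image ⇑ψ) '' H) (G (6 * t * N) i)
    rw [inv2_perm] at hd
    have h3' : IsThreeGraph (symmDiff ((fun e => e.image ⇑ψ) '' H) (G (6 * t * N) i)) := by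
      intro e he
      rcases he with ⟨⟨e', he', rfl⟩, -⟩ | ⟨he, -⟩
      · simp only [Finset.card_image_of_injective _ ψ.injective]
        exact h3 _ he'
      · exact hG _ _ _ he
    rw [tri_eq _ h3'] at hd
    rw [hcast] at hd hψ
    have h6 : (0 : ℝ) ≤ 12 * (6 * (t * N)) := by positivity
    have := mul_le_mul_of_nonneg_left hψ h6
    linarith
  choose f v hv hf using hall
  obtain ⟨j, j', hne, hij⟩ := Fintype.exists_ne_map_eq_of_card_lt f (by simp)
  have h1 := hf j
  have h2 := hf j'
  rw [hij] at h1
  have hE : 12 * (6 * (t * N : ℝ)) * (1 / (10000 * (t : ℝ) ^ 2) * (6 * (t * N)) ^ 3)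
      = 15552 / 10000 * ((t : ℝ) ^ 2 * N ^ 4) := by
    field_simp
    norm_num
  rw [hE] at h1 h2
  have hdiff : v j - v j' = 8 * ((t : ℝ) ^ 2 * N ^ 4) *
      ((j'.val : ℝ) * (2 * t - j'.val) - j.val * (2 * t - j.val)) := by
    rw [hv, hv]; ring
  have hQ : (0 : ℝ) < (t : ℝ) ^ 2 * N ^ 4 := by positivity
  have habs : |v j - v j'| ≤ 2 * (15552 / 10000 * ((t : ℝ) ^ 2 * N ^ 4)) := by
    rw [abs_le] at h1 h2 ⊢
    constructor <;> linarith [h1.1, h1.2, h2.1, h2.2]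
  rw [hdiff, abs_mul, abs_of_pos (by positivity)] at habs
  have hge : (1 : ℝ) ≤ |(j'.val : ℝ) * (2 * t - j'.val) - j.val * (2 * t - j.val)| := by
    have hz : (1 : ℤ) ≤ |(j'.val : ℤ) * (2 * t - j'.val) - j.val * (2 * t - j.val)| := by
      apply Int.one_le_abs
      have : (j'.val : ℤ) * (2 * t - j'.val) - j.val * (2 * t - j.val)
        = ((j'.val : ℤ) - j.val) * (2 * t - j'.val - j.val) := by ring
      rw [this]
      have hne' : j.val ≠ j'.val := fun h => hne (Fin.ext h)
      apply mul_ne_zero <;> omega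
    exact_mod_cast hz
  nlinarith
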